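/- arXiv:1505.00275 — 2 statements merged into one kernel-verified Lean document; each statement's English description precedes it below -/
import Mathlib

section
/- Let a_K > 0 and let ã ≤ −a_K < a_K ≤ b̃ be real numbers. Let K : ℝ → ℝ be even, integrable, and satisfy K(u) = 0 for all |u| ≥ a_K. Let P_0,…,P_M be real polynomials with deg P_k = k exactly, P_0 identically equal to 1, parity P_k(−u) = (−1)^k P_k(u) for all u, and ∫_{ã}^{b̃} P_j(y) P_k(y) K(y) dy = δ_{jk} for all 0 ≤ j, k ≤ M. Define the step-taper effective kernel K_eff(u) = ∑_{k=0}^{M} P_k(0) P_k(−u) K(−u). Then the moments μ_j(K_eff) = ∫_ℝ u^j K_eff(u) du satisfy: μ_0(K_eff) = 1; μ_j(K_eff) = 0 for all 1 ≤ j ≤ M; and if M is even then additionally μ_{M+1}(K_eff) = 0. Consequently K_eff is a high-order kernel of order at least M+1 when M is odd and of order at least M+2 when M is even. -/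
open MeasureTheory Polynomial Finset

/-!
If `L` is a linear functional on polynomials for which `P₀, …, P_M` are orthonormal, with
`deg P_k = k`, then `D_x = ∑ P_k(x) P_k` satisfies `L (q * D_x) = q(x)` for `q` among the `P_k`,
hence for every `q` of degree at most `M`. For `L q = ∫ q K` and `x = 0` this says that integrating
against the effective kernel evaluates such a `q` at `0`, so the moments of order `j ≤ M` are
`0 ^ j`. Parity forces `P_k(0) = 0` for odd `k`, so the effective kernel is even and all its odd
moments vanish.
-/

section ChristoffelDarboux

variable {F : Type*} [Field F] {P : ℕ → F[X]} {M : ℕ}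

theorem span_image_Iic_eq_degreeLE (hdeg : ∀ k ≤ M, (P k).degree = (k : ℕ)) :
    Submodule.span F (P '' Set.Iic M) = degreeLE F M := by
  -- Above `M`, where nothing is known about `P`, complete it to a sequence by powers of `X`.
  let S : Polynomial.Sequence F :=
    { elems' := fun k => if k ≤ M then P k else X ^ k
      degree_eq' := fun k => by
        split_ifs with hk
        exacts [hdeg k hk, degree_X_pow k] }
  have hS : Set.EqOn S P (Set.Iic M) := fun _ hk => if_pos hk
  rw [← hS.image_eq]
  exact S.span_degreeLE fun k _ => (leadingCoeff_ne_zero.2 (S.ne_zero k)).isUnit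

/-- The Christoffel–Darboux kernel `∑_{k ≤ M} P_k(x) P_k`, as a polynomial in its second variable;
it is the reproducing kernel of the polynomials of degree at most `M`. -/
noncomputable def christoffelDarboux (P : ℕ → F[X]) (M : ℕ) (x : F) : F[X] :=
  ∑ k ∈ range (M + 1), (P k).eval x • P k

theorem map_mul_christoffelDarboux (L : F[X] →ₗ[F] F) (q : F[X]) (x : F) :
    L (q * christoffelDarboux P M x) = ∑ k ∈ range (M + 1), (P k).eval x * L (q * P k) := by
  simp only [christoffelDarboux, mul_sum, map_sum, mul_smul_comm, map_smul, smul_eq_mul]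

theorem map_mul_christoffelDarboux_eq_eval {L : F[X] →ₗ[F] F}
    (hdeg : ∀ k ≤ M, (P k).degree = (k : ℕ))
    (horth : ∀ j ≤ M, ∀ k ≤ M, L (P j * P k) = if j = k then 1 else 0)
    {q : F[X]} (hq : q.degree ≤ M) (x : F) :
    L (q * christoffelDarboux P M x) = q.eval x := by
  have heqOn : Set.EqOn (L ∘ₗ LinearMap.mulRight F (christoffelDarboux P M x)) (leval x)
      (P '' Set.Iic M) := by
    rintro _ ⟨j, hj : j ≤ M, rfl⟩
    have hterm : ∀ k ∈ range (M + 1),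
        (P k).eval x * L (P j * P k) = if j = k then (P k).eval x else 0 := fun k hk => by
      rw [horth j hj k (mem_range_succ_iff.1 hk), mul_ite, mul_one, mul_zero]
    change L (P j * christoffelDarboux P M x) = (P j).eval x
    rw [map_mul_christoffelDarboux, sum_congr rfl hterm, sum_ite_eq,
      if_pos (mem_range_succ_iff.2 hj)]
  refine LinearMap.eqOn_span heqOn ?_
  rwa [span_image_Iic_eq_degreeLE hdeg, mem_degreeLE]

theorem eval_neg_christoffelDarboux_zero [CharZero F]
    (hpar : ∀ k ≤ M, ∀ u : F, (P k).eval (-u) = (-1) ^ k * (P k).eval u) (u : F) :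
    (christoffelDarboux P M 0).eval (-u) = (christoffelDarboux P M 0).eval u := by
  simp only [christoffelDarboux, eval_finsetSum, eval_smul, smul_eq_mul]
  refine sum_congr rfl fun k hk => ?_
  have hpar_k := hpar k (mem_range_succ_iff.1 hk)
  rcases k.even_or_odd with hk_even | hk_odd
  · rw [hpar_k, hk_even.neg_one_pow, one_mul]
  · have hP_odd : Function.Odd fun v => (P k).eval v := fun v =>
      (hpar_k v).trans (by rw [hk_odd.neg_one_pow, neg_one_mul])
    rw [hP_odd.map_zero, zero_mul, zero_mul]

end ChristoffelDarboux

section Integration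

theorem integral_eq_zero_of_odd {G E : Type*} [MeasurableSpace G] [AddGroup G] [MeasurableNeg G]
    {μ : Measure G} [μ.IsNegInvariant] [NormedAddCommGroup E] [NormedSpace ℝ E] {f : G → E}
    (hf : f.Odd) : ∫ x, f x ∂μ = 0 := by
  have hneg := integral_neg_eq_self f μ
  simp only [hf.eq, integral_neg] at hneg
  have : IsAddTorsionFree E := .of_isTorsionFree ℝ E
  exact neg_eq_self.1 hneg

theorem integral_pow_mul_eq_zero_of_even_of_odd {μ : Measure ℝ} [μ.IsNegInvariant] {f : ℝ → ℝ}
    (hf : f.Even) {j : ℕ} (hj : Odd j) : ∫ u, u ^ j * f u ∂μ = 0 :=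
  integral_eq_zero_of_odd fun u => by rw [hj.neg_pow, hf.eq, neg_mul]

theorem integrable_continuous_mul_of_support_subset {X R : Type*} [TopologicalSpace X] [T2Space X]
    [MeasurableSpace X] [OpensMeasurableSpace X] [NormedRing R] [SecondCountableTopologyEither X R]
    {μ : Measure X} {f g : X → R} {s : Set X} (hg : Continuous g) (hf : Integrable f μ)
    (hs : IsCompact s) (hfs : Function.support f ⊆ s) :
    Integrable (fun x => g x * f x) μ :=
  (hf.integrableOn.continuousOn_mul hg.continuousOn hs).integrable_of_forall_notMem_eq_zero
    fun x hx => by rw [Function.notMem_support.1 fun hfx => hx (hfs hfx), mul_zero]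

variable {μ : Measure ℝ} {K : ℝ → ℝ}

theorem integrable_eval_mul (hK : ∀ n : ℕ, Integrable (fun u => u ^ n * K u) μ) (q : ℝ[X]) :
    Integrable (fun u => q.eval u * K u) μ := by
  simp only [eval_eq_sum_range, sum_mul, mul_assoc]
  exact integrable_finsetSum _ fun n _ => (hK n).const_mul _

/-- The functional `q ↦ ∫ q(u) K(u) dμ(u)` on polynomials, for `K` with finite moments with respect
to `μ`. -/
noncomputable def momentFunctional (hK : ∀ n : ℕ, Integrable (fun u => u ^ n * K u) μ) :
    ℝ[X] →ₗ[ℝ] ℝ where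
  toFun q := ∫ u, q.eval u * K u ∂μ
  map_add' p q := by
    simp only [eval_add, add_mul]
    exact integral_add (integrable_eval_mul hK p) (integrable_eval_mul hK q)
  map_smul' c q := by
    simp only [eval_smul, smul_eq_mul, mul_assoc, RingHom.id_apply, integral_const_mul]

theorem momentFunctional_apply (hK : ∀ n : ℕ, Integrable (fun u => u ^ n * K u) μ) (q : ℝ[X]) :
    momentFunctional hK q = ∫ u, q.eval u * K u ∂μ := rfl

end Integration

section EffectiveKernel

variable {μ : Measure ℝ} [μ.IsNegInvariant] {K : ℝ → ℝ} {P : ℕ → ℝ[X]} {M : ℕ}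

/-- The effective kernel of `K` and `P` with the step taper that keeps the indices `k ≤ M`. -/
noncomputable def effectiveKernel (P : ℕ → ℝ[X]) (M : ℕ) (K : ℝ → ℝ) (u : ℝ) : ℝ :=
  ∑ k ∈ range (M + 1), (P k).eval 0 * (P k).eval (-u) * K (-u)

theorem effectiveKernel_eq_christoffelDarboux_mul (u : ℝ) :
    effectiveKernel P M K u = (christoffelDarboux P M 0).eval (-u) * K (-u) := by
  simp only [effectiveKernel, christoffelDarboux, eval_finsetSum, eval_smul, smul_eq_mul, sum_mul]

theorem integral_eval_mul_effectiveKernel (hK : ∀ n : ℕ, Integrable (fun u => u ^ n * K u) μ)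
    (hdeg : ∀ k ≤ M, (P k).degree = (k : ℕ))
    (horth : ∀ j ≤ M, ∀ k ≤ M,
      ∫ u, (P j).eval u * (P k).eval u * K u ∂μ = if j = k then (1 : ℝ) else 0)
    {q : ℝ[X]} (hq : q.degree ≤ M) :
    ∫ u, q.eval u * effectiveKernel P M K u ∂μ = q.eval 0 := by
  have hq_neg : (q.comp (-X)).degree ≤ M := by
    rw [← natDegree_le_iff_degree_le] at hq ⊢
    simpa [natDegree_comp] using hq
  calc ∫ u, q.eval u * effectiveKernel P M K u ∂μ
      = ∫ u, q.eval (-u) * effectiveKernel P M K (-u) ∂μ := (integral_neg_eq_self _ μ).symm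
    _ = momentFunctional hK (q.comp (-X) * christoffelDarboux P M 0) := by
      simp only [momentFunctional_apply, effectiveKernel_eq_christoffelDarboux_mul, neg_neg,
        eval_mul, eval_comp, eval_neg, eval_X, mul_assoc]
    _ = (q.comp (-X)).eval 0 :=
      map_mul_christoffelDarboux_eq_eval hdeg
        (by simpa only [momentFunctional_apply, eval_mul] using horth) hq_neg 0
    _ = q.eval 0 := by simp only [eval_comp, eval_neg, eval_X, neg_zero]

theorem integral_pow_mul_effectiveKernel (hK : ∀ n : ℕ, Integrable (fun u => u ^ n * K u) μ)
    (hdeg : ∀ k ≤ M, (P k).degree = (k : ℕ))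
    (horth : ∀ j ≤ M, ∀ k ≤ M,
      ∫ u, (P j).eval u * (P k).eval u * K u ∂μ = if j = k then (1 : ℝ) else 0)
    {j : ℕ} (hj : j ≤ M) :
    ∫ u, u ^ j * effectiveKernel P M K u ∂μ = 0 ^ j := by
  have hdeg_X_pow : (X ^ j : ℝ[X]).degree ≤ M := (degree_X_pow_le j).trans (Nat.cast_le.2 hj)
  simpa only [eval_pow, eval_X] using integral_eval_mul_effectiveKernel hK hdeg horth hdeg_X_pow

theorem effectiveKernel_even (hK_even : K.Even)
    (hpar : ∀ k ≤ M, ∀ u : ℝ, (P k).eval (-u) = (-1) ^ k * (P k).eval u) :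
    (effectiveKernel P M K).Even := fun u => by
  simp only [effectiveKernel_eq_christoffelDarboux_mul, eval_neg_christoffelDarboux_zero hpar,
    hK_even.eq]

theorem stmt_9_general (hK : ∀ n : ℕ, Integrable (fun u => u ^ n * K u) μ) (hK_even : K.Even)
    (hdeg : ∀ k ≤ M, (P k).degree = (k : ℕ))
    (hpar : ∀ k ≤ M, ∀ u : ℝ, (P k).eval (-u) = (-1) ^ k * (P k).eval u)
    (horth : ∀ j ≤ M, ∀ k ≤ M,
      ∫ u, (P j).eval u * (P k).eval u * K u ∂μ = if j = k then (1 : ℝ) else 0) :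
    ∫ u, effectiveKernel P M K u ∂μ = 1 ∧
    (∀ j : ℕ, 1 ≤ j → j ≤ M → ∫ u, u ^ j * effectiveKernel P M K u ∂μ = 0) ∧
    (∀ j : ℕ, Odd j → ∫ u, u ^ j * effectiveKernel P M K u ∂μ = 0) := by
  have hmoment {j : ℕ} (hj : j ≤ M) := integral_pow_mul_effectiveKernel hK hdeg horth hj
  refine ⟨?_, fun j hj_pos hj => ?_, fun j hj_odd => ?_⟩
  · simpa only [pow_zero, one_mul] using hmoment M.zero_le
  · rw [hmoment hj, zero_pow (Nat.one_le_iff_ne_zero.1 hj_pos)]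
  · exact integral_pow_mul_eq_zero_of_even_of_odd (effectiveKernel_even hK_even hpar) hj_odd

end EffectiveKernel

/-- The step-taper effective kernel `K_eff(u) = ∑_{k=0}^{M} P_k(0) P_k(-u) K(-u)` built
from orthonormal polynomials with exact degrees, parity and `P_0 ≡ 1`, for an even
integrable kernel `K` vanishing outside `(-a_K, a_K) ⊆ [ã, b̃]`, has moments
`μ_0 = 1`, `μ_j = 0` for `1 ≤ j ≤ M`, and also `μ_{M+1} = 0` when `M` is even; hence it
is a high-order kernel of order `M+1` (`M` odd) or `M+2` (`M` even). -/
theorem stmt_9 (aK atil btil : ℝ) (haK : 0 < aK) (ha : atil ≤ -aK) (hb : aK ≤ btil)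
    (K : ℝ → ℝ) (hKeven : ∀ u, K (-u) = K u) (hKint : Integrable K)
    (hKsupp : ∀ u, aK ≤ |u| → K u = 0)
    (M : ℕ) (P : ℕ → Polynomial ℝ)
    (hdeg : ∀ k ≤ M, (P k).degree = (k : ℕ))
    (hP0 : P 0 = 1)
    (hpar : ∀ k ≤ M, ∀ u : ℝ, (P k).eval (-u) = (-1) ^ k * (P k).eval u)
    (horth : ∀ j ≤ M, ∀ k ≤ M,
      ∫ y in atil..btil, (P j).eval y * (P k).eval y * K y
        = if j = k then (1:ℝ) else 0) :
    let Keff : ℝ → ℝ := fun u =>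
      ∑ k ∈ Finset.range (M + 1), (P k).eval 0 * (P k).eval (-u) * K (-u)
    (∫ u, Keff u) = 1 ∧
    (∀ j : ℕ, 1 ≤ j → j ≤ M → ∫ u, u ^ j * Keff u = 0) ∧
    (Even M → ∫ u, u ^ (M + 1) * Keff u = 0) := by
  have hsupp : Function.support K ⊆ Set.Ioo (-aK) aK := fun u hu =>
    abs_lt.1 <| not_le.1 fun h => hu (hKsupp u h)
  have hmoments (n : ℕ) : Integrable (fun u => u ^ n * K u) :=
    integrable_continuous_mul_of_support_subset (continuous_pow n) hKint isCompact_Icc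
      (hsupp.trans Set.Ioo_subset_Icc_self)
  have hintegral (j k : ℕ) : ∫ y in atil..btil, (P j).eval y * (P k).eval y * K y =
      ∫ y, (P j).eval y * (P k).eval y * K y :=
    intervalIntegral.integral_eq_integral_of_support_subset <|
      (Function.support_mul_subset_right _ K).trans <| hsupp.trans <|
        (Set.Ioo_subset_Ioo ha hb).trans Set.Ioo_subset_Ioc_self
  simp only [hintegral] at horth
  obtain ⟨hmass, hlow, hodd⟩ := stmt_9_general hmoments hKeven hdeg hpar horth
  exact ⟨hmass, hlow, fun hM => hodd (M + 1) hM.add_one⟩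
end

section
/- Let a < b be real numbers, x_fit ∈ ℝ, n ≥ 1, x_1,…,x_n ∈ ℝ a sample, M ∈ ℕ, and L_0,…,L_M real polynomials. Let K : ℝ → ℝ be continuous at 0 with K(0) > 0. For each h > 0, define the rescaled polynomials P̃_k^h(y) = √(2h/((b−a)K(0))) · L_k((2yh + 2x_fit − a − b)/(b−a)) and the LOrPE estimate f̂_h(x) = (1/(n h)) ∑_{i=1}^{n} ∑_{k=0}^{M} P̃_k^h((x − x_fit)/h) · P̃_k^h((x_i − x_fit)/h) · K((x_i − x_fit)/h). Then for every x ∈ ℝ, as h → ∞, f̂_h(x) converges to (1/n) ∑_{i=1}^{n} ∑_{k=0}^{M} φ_k(x) φ_k(x_i), where φ_k(x) = √(2/(b−a)) · L_k((2x − a − b)/(b−a)); that is, in the large-bandwidth limit LOrPE reduces to the classical orthogonal series density estimate with the affinely rescaled basis φ_k on [a, b]. -/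
open Polynomial Finset Filter

/-!
Recentring at `x₀` and dilating by `h` is undone when the rescaled basis functions are evaluated at
`h⁻¹ • (y - x₀)`, and the product of their two normalising factors `√(h ^ d / K 0)` cancels the
factor `h ^ (-d)` of the estimate. All that remains of the bandwidth is the kernel weight
`K (h⁻¹ • (x i - x₀)) / K 0` of each observation, which tends to `1`.
-/

section Localization

variable {E ι κ : Type*} [AddCommGroup E] [Module ℝ E]

/-- The function `f` in the coordinate `y` with origin `x₀` and unit `h`, scaled by
`√(h ^ d / K 0)`. If the `f`s are orthonormal and `d = dim E`, the results are orthonormal for the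
constant weight `K 0`, to which the kernel flattens in the large-bandwidth limit. -/
noncomputable def localizedBasis (K : E → ℝ) (d : ℕ) (x₀ : E) (h : ℝ) (f : E → ℝ) (y : E) : ℝ :=
  √(h ^ d / K 0) * f (h • y + x₀)

/-- The LOrPE estimate at `z` with bandwidth `h`, fitted at `x₀`, from the basis functions `φ k`,
`k ∈ s`. The observations `x i` carry weights `w i`, the unweighted case being
`w i = 1 / card ι`; the exponent `d` stands for the dimension of `E`. -/
noncomputable def lorpeEstimate [Fintype ι] (K : E → ℝ) (d : ℕ) (x₀ : E) (s : Finset κ)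
    (φ : κ → E → ℝ) (w : ι → ℝ) (x : ι → E) (z : E) (h : ℝ) : ℝ :=
  ∑ i, w i / h ^ d * ∑ k ∈ s, localizedBasis K d x₀ h (φ k) (h⁻¹ • (z - x₀))
    * localizedBasis K d x₀ h (φ k) (h⁻¹ • (x i - x₀)) * K (h⁻¹ • (x i - x₀))

theorem localizedBasis_inv_smul_sub (K : E → ℝ) (d : ℕ) (x₀ : E) {h : ℝ} (hh : h ≠ 0)
    (f : E → ℝ) (y : E) :
    localizedBasis K d x₀ h f (h⁻¹ • (y - x₀)) = √(h ^ d / K 0) * f y := by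
  rw [localizedBasis, smul_inv_smul₀ hh, sub_add_cancel]

theorem lorpeEstimate_eq_sum_kernel_ratio [Fintype ι] {K : E → ℝ} (hK0 : 0 < K 0) (d : ℕ) (x₀ : E)
    (s : Finset κ) (φ : κ → E → ℝ) (w : ι → ℝ) (x : ι → E) (z : E) {h : ℝ} (hh : 0 < h) :
    lorpeEstimate K d x₀ s φ w x z h =
      ∑ i, w i * ∑ k ∈ s, φ k z * φ k (x i) * (K (h⁻¹ • (x i - x₀)) / K 0) := by
  have sq_scale : √(h ^ d / K 0) ^ 2 = h ^ d / K 0 := Real.sq_sqrt (by positivity)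
  simp only [lorpeEstimate, localizedBasis_inv_smul_sub K d x₀ hh.ne', mul_sum]
  refine sum_congr rfl fun i _ => sum_congr rfl fun k _ => ?_
  calc w i / h ^ d * (√(h ^ d / K 0) * φ k z * (√(h ^ d / K 0) * φ k (x i))
        * K (h⁻¹ • (x i - x₀)))
      = w i / h ^ d * √(h ^ d / K 0) ^ 2 * (φ k z * φ k (x i) * K (h⁻¹ • (x i - x₀))) := by ring
    _ = w i * (φ k z * φ k (x i) * (K (h⁻¹ • (x i - x₀)) / K 0)) := by
        rw [sq_scale]
        field_simp

variable [TopologicalSpace E] [ContinuousSMul ℝ E]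

theorem tendsto_comp_inv_smul_atTop {Y : Type*} [TopologicalSpace Y] {f : E → Y}
    (hf : ContinuousAt f 0) (v : E) :
    Tendsto (fun h : ℝ => f (h⁻¹ • v)) atTop (nhds (f 0)) := by
  refine hf.tendsto.comp ?_
  simpa only [zero_smul] using (tendsto_inv_atTop_zero (𝕜 := ℝ)).smul_const v

theorem stmt_10_general [Fintype ι] {K : E → ℝ} (hK0 : 0 < K 0) (hKcont : ContinuousAt K 0)
    (d : ℕ) (x₀ : E) (s : Finset κ) (φ : κ → E → ℝ) (w : ι → ℝ) (x : ι → E) (z : E) :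
    Tendsto (lorpeEstimate K d x₀ s φ w x z) atTop
      (nhds (∑ i, w i * ∑ k ∈ s, φ k z * φ k (x i))) := by
  have kernel_ratio (i : ι) :
      Tendsto (fun h : ℝ => K (h⁻¹ • (x i - x₀)) / K 0) atTop (nhds 1) := by
    simpa only [div_self hK0.ne'] using
      (tendsto_comp_inv_smul_atTop hKcont (x i - x₀)).div_const (K 0)
  have limit : Tendsto
      (fun h : ℝ => ∑ i, w i * ∑ k ∈ s, φ k z * φ k (x i) * (K (h⁻¹ • (x i - x₀)) / K 0))
      atTop (nhds (∑ i, w i * ∑ k ∈ s, φ k z * φ k (x i))) := by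
    refine tendsto_finsetSum _ fun i _ => (tendsto_finsetSum _ fun k _ => ?_).const_mul (w i)
    simpa only [mul_one] using (kernel_ratio i).const_mul (φ k z * φ k (x i))
  refine limit.congr' ?_
  filter_upwards [eventually_gt_atTop 0] with h hh
  exact (lorpeEstimate_eq_sum_kernel_ratio hK0 d x₀ s φ w x z hh).symm

end Localization

/-- The transport of `f` from `[-1, 1]` to `[a, b]` along the increasing affine bijection,
normalised so that the `L²` norm is preserved. -/
noncomputable def intervalRescale (a b : ℝ) (f : ℝ → ℝ) (y : ℝ) : ℝ :=
  √(2 / (b - a)) * f ((2 * y - a - b) / (b - a))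

theorem localizedBasis_intervalRescale {a b : ℝ} (hab : a ≤ b) (K : ℝ → ℝ) (x₀ h : ℝ)
    (f : ℝ → ℝ) (y : ℝ) :
    localizedBasis K 1 x₀ h (intervalRescale a b f) y =
      √(2 * h / ((b - a) * K 0)) * f ((2 * y * h + 2 * x₀ - a - b) / (b - a)) := by
  have scale : √(h / K 0) * √(2 / (b - a)) = √(2 * h / ((b - a) * K 0)) := by
    rw [← Real.sqrt_mul' _ (div_nonneg zero_le_two (sub_nonneg.mpr hab)), div_mul_div_comm,
      mul_comm h, mul_comm (K 0)]
  have argument : 2 * (h • y + x₀) - a - b = 2 * y * h + 2 * x₀ - a - b := by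
    rw [smul_eq_mul]
    ring
  rw [localizedBasis, intervalRescale, pow_one, argument, ← mul_assoc, scale]

/-- In the large-bandwidth limit `h → ∞`, the LOrPE estimate built from the rescaled
polynomials `P̃_k^h(y) = √(2h/((b-a)K(0))) L_k((2yh + 2x_fit - a - b)/(b-a))` converges,
at every point `x`, to the classical orthogonal series density estimate with the affinely
rescaled basis `φ_k(x) = √(2/(b-a)) L_k((2x - a - b)/(b-a))` on `[a, b]`. -/
theorem stmt_10 (a b : ℝ) (hab : a < b) (xfit : ℝ) (n : ℕ) (hn : 1 ≤ n)
    (x : Fin n → ℝ) (M : ℕ) (L : ℕ → Polynomial ℝ) (K : ℝ → ℝ)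
    (hK0 : 0 < K 0) (hKcont : ContinuousAt K 0) (z : ℝ) :
    let Ptil : ℝ → ℕ → ℝ → ℝ := fun h k y =>
      Real.sqrt (2 * h / ((b - a) * K 0))
        * (L k).eval ((2 * y * h + 2 * xfit - a - b) / (b - a))
    let fhat : ℝ → ℝ := fun h =>
      (1 / (n * h)) * ∑ i, ∑ k ∈ Finset.range (M + 1),
        Ptil h k ((z - xfit) / h) * Ptil h k ((x i - xfit) / h)
          * K ((x i - xfit) / h)
    let φ : ℕ → ℝ → ℝ := fun k y =>
      Real.sqrt (2 / (b - a)) * (L k).eval ((2 * y - a - b) / (b - a))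
    Tendsto fhat atTop
      (nhds ((1 / n) * ∑ i, ∑ k ∈ Finset.range (M + 1), φ k z * φ k (x i))) := by
  intro Ptil fhat φ
  have φ_eq : φ = fun k => intervalRescale a b fun t => (L k).eval t := rfl
  have fhat_eq : fhat =
      lorpeEstimate K 1 xfit (range (M + 1)) φ (fun _ => 1 / (n : ℝ)) x z := by
    funext h
    simp only [fhat, Ptil, φ_eq, lorpeEstimate, localizedBasis_intervalRescale hab.le, pow_one,
      smul_eq_mul, inv_mul_eq_div, div_div, ← mul_sum]
  rw [fhat_eq, mul_sum]
  exact stmt_10_general hK0 hKcont 1 xfit (range (M + 1)) φ (fun _ => 1 / (n : ℝ)) x z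
end
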